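/- For all real α, β > −1, every j ∈ ℕ, every sequence (M_n) of nonnegative reals, and every n ≥ 1, one has the exact identity (Q_n, Q_n)_{S,n} = ‖P_n^{(α,β)}‖² + M_n·((P_n^{(α,β)})^{(j)}(1))² / (1 + M_n K_{n−1}^{(j,j)}(1,1)). -/

import Mathlib

open Polynomial Filter

/-- The Jacobi polynomial `P_n^{(α,β)}` as a real polynomial. -/
noncomputable def jacobiP (α β : ℝ) (n : ℕ) : Polynomial ℝ :=
  ∑ k ∈ Finset.range (n + 1),
    Polynomial.C (Real.Gamma (n + α + 1) / (Real.Gamma ((n : ℝ) - k + 1) * Real.Gamma (α + k + 1)) *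
        (Real.Gamma (n + β + 1) / (Real.Gamma ((k : ℝ) + 1) * Real.Gamma ((n : ℝ) - k + β + 1)))) *
      (Polynomial.C (2⁻¹ : ℝ) * (Polynomial.X - 1)) ^ k *
      (Polynomial.C (2⁻¹ : ℝ) * (Polynomial.X + 1)) ^ (n - k)

/-- The squared Jacobi norm `‖P_n^{(α,β)}‖²`. -/
noncomputable def jacobiNormSq (α β : ℝ) (n : ℕ) : ℝ :=
  ∫ x in (-1 : ℝ)..1, (jacobiP α β n).eval x ^ 2 * (1 - x) ^ α * (1 + x) ^ β

/-- The kernel `K_n^{(j,k)}(x,y)`. -/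
noncomputable def kernK (α β : ℝ) (j k n : ℕ) (x y : ℝ) : ℝ :=
  ∑ i ∈ Finset.range (n + 1),
    (Polynomial.derivative^[j] (jacobiP α β i)).eval x *
      (Polynomial.derivative^[k] (jacobiP α β i)).eval y / jacobiNormSq α β i

/-- The kernel `K_n^{(j,0)}(1,·)` as a polynomial. -/
noncomputable def kernKPoly (α β : ℝ) (j n : ℕ) : Polynomial ℝ :=
  ∑ i ∈ Finset.range (n + 1),
    Polynomial.C ((Polynomial.derivative^[j] (jacobiP α β i)).eval 1 / jacobiNormSq α β i) *
      jacobiP α β i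

/-- The varying Sobolev inner product `(f,g)_{S,n}` with mass `m`. -/
noncomputable def sobInner (α β : ℝ) (j : ℕ) (m : ℝ) (f g : Polynomial ℝ) : ℝ :=
  (∫ x in (-1 : ℝ)..1, f.eval x * g.eval x * (1 - x) ^ α * (1 + x) ^ β) +
    m * (Polynomial.derivative^[j] f).eval 1 * (Polynomial.derivative^[j] g).eval 1

/-- The Jacobi–Sobolev orthogonal polynomial `Q_n`. -/
noncomputable def sobQ (α β : ℝ) (j : ℕ) (Ms : ℕ → ℝ) (n : ℕ) : Polynomial ℝ :=
  jacobiP α β n -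
    Polynomial.C (Ms n * (Polynomial.derivative^[j] (jacobiP α β n)).eval 1 /
        (1 + Ms n * kernK α β j j (n - 1) 1 1)) *
      kernKPoly α β j (n - 1)

/-!
Expanding in powers of `X - 1` and integrating termwise with the beta integral turns the
orthogonality of `P_n` to lower degrees into the vanishing of an `n`-th finite difference of a
polynomial of degree `< n`. Hence the kernel `κ = K_{n-1}^{(j,0)}(1, ·)` is orthogonal to `P_n`
and has squared norm `ℓ κ`, where `ℓ f = f^{(j)}(1)`. The Sobolev form is the rank-one update
`B + M ℓ ⊗ ℓ` of the Jacobi form `B`, and `c = M ℓ(P_n) / (1 + M ℓ κ)` is the coefficient that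
makes `Q_n = P_n - c κ` orthogonal to `κ` for it; expanding at `Q_n` gives the formula.
-/

section RankOneUpdate

variable {K V ι : Type*} [Field K] [AddCommGroup V] [Module K V]

theorem rankOneUpdate_apply_sub_smul_self {B : LinearMap.BilinForm K V} (hB : B.IsRefl)
    (ℓ : V →ₗ[K] K) {m : K} {p κ : V} (hpκ : B p κ = 0) (hκ : B κ κ = ℓ κ) (hm : 1 + m * ℓ κ ≠ 0) :
    (B + m • LinearMap.BilinForm.linMulLin ℓ ℓ) (p - (m * ℓ p / (1 + m * ℓ κ)) • κ)
        (p - (m * ℓ p / (1 + m * ℓ κ)) • κ) =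
      B p p + m * ℓ p ^ 2 / (1 + m * ℓ κ) := by
  have hκp : B κ p = 0 := hB p κ hpκ
  simp only [LinearMap.add_apply, LinearMap.sub_apply, LinearMap.smul_apply,
    LinearMap.BilinForm.linMulLin_apply, map_sub, map_smul, smul_eq_mul, hpκ, hκp, hκ]
  field_simp
  ring

/-- The element of the span of `p i`, `i ∈ s`, which represents the functional `ℓ` on that span
with respect to `B` when the `p i` are orthogonal; an isotropic `p i` contributes `0`, by the
convention `x / 0 = 0`. -/
def reproducingKernel (B : LinearMap.BilinForm K V) (ℓ : V →ₗ[K] K) (p : ι → V) (s : Finset ι) :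
    V :=
  ∑ i ∈ s, (ℓ (p i) / B (p i) (p i)) • p i

variable {B : LinearMap.BilinForm K V} (ℓ : V →ₗ[K] K) {p : ι → V} {s : Finset ι}

theorem apply_reproducingKernel_of_notMem (hp : B.IsOrthoᵢ p) {i : ι} (hi : i ∉ s) :
    B (p i) (reproducingKernel B ℓ p s) = 0 := by
  rw [reproducingKernel, map_sum]
  refine Finset.sum_eq_zero fun k hk => ?_
  rw [map_smul, LinearMap.isOrthoᵢ_def.1 hp i k (ne_of_mem_of_not_mem hk hi).symm, smul_zero]

-- Left uncancelled, the quotient also covers `B (p i) (p i) = 0`.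
theorem apply_reproducingKernel_of_mem (hp : B.IsOrthoᵢ p) {i : ι} (hi : i ∈ s) :
    B (p i) (reproducingKernel B ℓ p s) = ℓ (p i) / B (p i) (p i) * B (p i) (p i) := by
  rw [reproducingKernel, map_sum, Finset.sum_eq_single_of_mem i hi fun k _ hk => ?_, map_smul,
    smul_eq_mul]
  rw [map_smul, LinearMap.isOrthoᵢ_def.1 hp i k hk.symm, smul_zero]

theorem apply_reproducingKernel_self (hp : B.IsOrthoᵢ p) :
    B (reproducingKernel B ℓ p s) (reproducingKernel B ℓ p s) =
      ℓ (reproducingKernel B ℓ p s) := by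
  conv_lhs => arg 1; rw [reproducingKernel]
  conv_rhs => rw [reproducingKernel]
  simp only [map_sum, LinearMap.sum_apply, map_smul, LinearMap.smul_apply, smul_eq_mul]
  refine Finset.sum_congr rfl fun i hi => ?_
  rw [apply_reproducingKernel_of_mem ℓ hp hi]
  rcases eq_or_ne (B (p i) (p i)) 0 with h | h
  · simp only [h, div_zero, zero_mul]
  · rw [div_mul_cancel₀ _ h]

end RankOneUpdate

theorem sum_neg_one_pow_mul_choose_mul_eval_eq_zero {R : Type*} [CommRing R] {q : R[X]} {n : ℕ}
    (hq : q.natDegree < n) (y : R) :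
    ∑ k ∈ Finset.range (n + 1), (-1) ^ k * (n.choose k : R) * q.eval (y + k) = 0 := by
  have hΔ := congrFun (fwdDiff_iter_eq_zero_of_degree_lt hq) y
  rw [fwdDiff_iter_eq_sum_shift, Pi.zero_apply] at hΔ
  rw [← mul_zero ((-1 : R) ^ n), ← hΔ, Finset.mul_sum]
  refine Finset.sum_congr rfl fun k hk => ?_
  have hsign : (-1 : R) ^ n * (-1) ^ (n - k) = (-1) ^ k := by
    have hkn : k ≤ n := Finset.mem_range_succ_iff.1 hk
    rw [← pow_add, show n + (n - k) = k + 2 * (n - k) by lia, pow_add, pow_mul, neg_one_sq,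
      one_pow, mul_one]
  rw [← hsign, zsmul_eq_mul, nsmul_one]
  push_cast
  ring

theorem Gamma_add_natCast_div_Gamma {z : ℝ} (hz : ∀ k : ℕ, z ≠ -k) (n : ℕ) :
    Real.Gamma (z + n) / Real.Gamma z = (ascPochhammer ℝ n).eval z := by
  have hℂ := Complex.Gamma_add_nat_div_Gamma_eq (n := n) (z : ℂ) fun k => by exact_mod_cast hz k
  rw [← ascPochhammer_map Complex.ofRealHom, eval_map, ← Complex.ofRealHom_eq_coe z,
    eval₂_at_apply] at hℂ
  simp only [Complex.ofRealHom_eq_coe, ← Complex.ofReal_natCast, ← Complex.ofReal_add,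
    Complex.Gamma_ofReal] at hℂ
  exact_mod_cast hℂ

section JacobiWeight

/-- The Jacobi weight `(1 - x)^α (1 + x)^β` on `[-1, 1]`. -/
noncomputable def jacobiWeight (α β x : ℝ) : ℝ := (1 - x) ^ α * (1 + x) ^ β

variable {α β : ℝ}

open ProbabilityTheory (beta beta_pos beta_eq_betaIntegralReal)

theorem integral_jacobiWeight (hα : -1 < α) (hβ : -1 < β) :
    ∫ x in (-1 : ℝ)..1, jacobiWeight α β x = 2 ^ (α + β + 1) * beta (α + 1) (β + 1) := by
  have hshift : ∫ x in (-1 : ℝ)..1, jacobiWeight α β x =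
      ∫ y in (0 : ℝ)..2, y ^ α * (2 - y) ^ β := calc
    ∫ x in (-1 : ℝ)..1, jacobiWeight α β x
    _ = ∫ x in (-1 : ℝ)..1, (1 - x) ^ α * (2 - (1 - x)) ^ β := by
      refine intervalIntegral.integral_congr fun x _ => ?_
      rw [jacobiWeight, show 2 - (1 - x) = 1 + x by ring]
    _ = ∫ y in (1 - 1 : ℝ)..1 - -1, y ^ α * (2 - y) ^ β :=
      intervalIntegral.integral_comp_sub_left (fun y : ℝ => y ^ α * (2 - y) ^ β) 1
    _ = ∫ y in (0 : ℝ)..2, y ^ α * (2 - y) ^ β := by norm_num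
  have hcast : ((∫ y in (0 : ℝ)..2, y ^ α * (2 - y) ^ β : ℝ) : ℂ) =
      ∫ y in (0 : ℝ)..2, (y : ℂ) ^ (((α + 1 : ℝ) : ℂ) - 1) *
        (((2 : ℝ) : ℂ) - y) ^ (((β + 1 : ℝ) : ℂ) - 1) := by
    rw [← intervalIntegral.integral_ofReal]
    refine intervalIntegral.integral_congr fun y hy => ?_
    rw [Set.uIcc_of_le zero_le_two] at hy
    simp only [Complex.ofReal_mul, Complex.ofReal_cpow hy.1,
      Complex.ofReal_cpow (sub_nonneg.2 hy.2)]
    push_cast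
    simp only [add_sub_cancel_right]
  rw [Complex.betaIntegral_scaled _ _ two_pos] at hcast
  have hpow : ((2 : ℝ) : ℂ) ^ (((α + 1 : ℝ) : ℂ) + ((β + 1 : ℝ) : ℂ) - 1) =
      ((2 ^ (α + β + 1) : ℝ) : ℂ) := by
    rw [Complex.ofReal_cpow zero_le_two]
    push_cast
    ring_nf
  rw [hshift, beta_eq_betaIntegralReal _ _ (by linarith) (by linarith), ← Complex.re_ofReal_mul,
    ← hpow, ← hcast, Complex.ofReal_re]

theorem intervalIntegrable_jacobiWeight (hα : -1 < α) (hβ : -1 < β) :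
    IntervalIntegrable (jacobiWeight α β) MeasureTheory.volume (-1) 1 := by
  by_contra h
  have hpos : 0 < ∫ x in (-1 : ℝ)..1, jacobiWeight α β x := by
    rw [integral_jacobiWeight hα hβ]
    exact mul_pos (by positivity) (beta_pos (by linarith) (by linarith))
  exact hpos.ne' (intervalIntegral.integral_undef h)

theorem sub_one_pow_mul_add_one_pow_mul_jacobiWeight {x : ℝ} (hx : x ∈ Set.Ioo (-1 : ℝ) 1)
    (k l : ℕ) :
    (x - 1) ^ k * (x + 1) ^ l * jacobiWeight α β x =
      (-1) ^ k * jacobiWeight (α + k) (β + l) x := by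
  have hsub : 1 - x ≠ 0 := (sub_pos.2 hx.2).ne'
  have hadd : 1 + x ≠ 0 := (neg_lt_iff_pos_add'.1 hx.1).ne'
  rw [jacobiWeight, jacobiWeight, Real.rpow_add_natCast hsub, Real.rpow_add_natCast hadd,
    ← neg_sub 1 x, neg_pow, add_comm x 1]
  ring

/-- Integration against the Jacobi weight, as a linear functional on polynomials. -/
noncomputable def jacobiFunctional (hα : -1 < α) (hβ : -1 < β) : ℝ[X] →ₗ[ℝ] ℝ where
  toFun q := ∫ x in (-1 : ℝ)..1, q.eval x * jacobiWeight α β x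
  map_add' p q := by
    have hint (r : ℝ[X]) := (intervalIntegrable_jacobiWeight hα hβ).continuousOn_mul
      r.continuous.continuousOn
    simp only [eval_add, add_mul]
    exact intervalIntegral.integral_add (hint p) (hint q)
  map_smul' c q := by
    simp only [eval_smul, smul_eq_mul, mul_assoc, RingHom.id_apply,
      intervalIntegral.integral_const_mul]

variable (hα : -1 < α) (hβ : -1 < β)

theorem jacobiFunctional_apply (q : ℝ[X]) :
    jacobiFunctional hα hβ q = ∫ x in (-1 : ℝ)..1, q.eval x * jacobiWeight α β x :=
  rfl

theorem jacobiFunctional_sub_one_pow_mul_add_one_pow (k l : ℕ) :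
    jacobiFunctional hα hβ ((X - 1) ^ k * (X + 1) ^ l) =
      (-1) ^ k * (2 ^ (α + k + (β + l) + 1) * beta (α + k + 1) (β + l + 1)) := by
  have hαk : -1 < α + k := hα.trans_le (le_add_of_nonneg_right k.cast_nonneg)
  have hβl : -1 < β + l := hβ.trans_le (le_add_of_nonneg_right l.cast_nonneg)
  rw [jacobiFunctional_apply, ← integral_jacobiWeight hαk hβl,
    ← intervalIntegral.integral_const_mul]
  refine intervalIntegral.integral_congr_Ioo_of_le (by norm_num) fun x hx => ?_
  simp only [eval_mul, eval_pow, eval_sub, eval_add, eval_X, eval_one]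
  exact sub_one_pow_mul_add_one_pow_mul_jacobiWeight hx k l

theorem jacobiFunctional_sub_one_pow_mul_add_one_pow_div_Gamma (k l m : ℕ) :
    jacobiFunctional hα hβ ((X - 1) ^ (k + m) * (X + 1) ^ l) /
        (Real.Gamma (α + k + 1) * Real.Gamma (β + l + 1)) =
      (-1) ^ (k + m) * 2 ^ (α + β + (k + l : ℕ) + m + 1) /
          Real.Gamma (α + β + (k + l : ℕ) + m + 2) *
        (ascPochhammer ℝ m).eval (α + 1 + k) := by
  have hαk : 0 < α + 1 + k := by linarith [(k.cast_nonneg : (0 : ℝ) ≤ k)]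
  have hβl : 0 < β + l + 1 := by linarith [(l.cast_nonneg : (0 : ℝ) ≤ l)]
  have hΓβ : Real.Gamma (β + l + 1) ≠ 0 := (Real.Gamma_pos_of_pos hβl).ne'
  have hexp : α + (k + m : ℕ) + (β + l) + 1 = α + β + (k + l : ℕ) + m + 1 := by
    push_cast
    ring
  have hΓ : α + (k + m : ℕ) + 1 + (β + l + 1) = α + β + (k + l : ℕ) + m + 2 := by
    push_cast
    ring
  have harg : α + (k + m : ℕ) + 1 = α + 1 + k + m := by
    push_cast
    ring
  rw [jacobiFunctional_sub_one_pow_mul_add_one_pow, beta, hexp, hΓ, harg, add_right_comm α k 1,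
    ← Gamma_add_natCast_div_Gamma fun i => ((neg_nonpos.2 i.cast_nonneg).trans_lt hαk).ne']
  field_simp

/-- The bilinear form `(p, q) ↦ ∫ p q (1 - x)^α (1 + x)^β` on polynomials. -/
noncomputable def jacobiForm : LinearMap.BilinForm ℝ ℝ[X] :=
  (LinearMap.mul ℝ ℝ[X]).compr₂ (jacobiFunctional hα hβ)

theorem jacobiForm_apply (p q : ℝ[X]) :
    jacobiForm hα hβ p q = jacobiFunctional hα hβ (p * q) :=
  rfl

theorem isSymm_jacobiForm : (jacobiForm hα hβ).IsSymm :=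
  ⟨fun p q => by simp only [jacobiForm_apply, mul_comm]⟩

end JacobiWeight

section Orthogonality

variable (α β : ℝ)

theorem jacobiP_eq_smul_sum (n : ℕ) :
    jacobiP α β n =
      (Real.Gamma (n + α + 1) * Real.Gamma (n + β + 1) / (2 ^ n * n.factorial)) •
        ∑ k ∈ Finset.range (n + 1),
          (n.choose k / (Real.Gamma (α + k + 1) * Real.Gamma (β + (n - k : ℕ) + 1))) •
            ((X - 1) ^ k * (X + 1) ^ (n - k)) := by
  rw [jacobiP, Finset.smul_sum]
  refine Finset.sum_congr rfl fun k hk => ?_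
  have hkn : k ≤ n := Finset.mem_range_succ_iff.1 hk
  have hΓ : Real.Gamma ((n : ℝ) - k + 1) = (n - k).factorial := by
    rw [← Nat.cast_sub hkn, Real.Gamma_nat_eq_factorial]
  have htwo : (2⁻¹ : ℝ) ^ k * 2⁻¹ ^ (n - k) = (2 ^ n)⁻¹ := by
    rw [← pow_add, Nat.add_sub_cancel' hkn, inv_pow]
  have hβ : (n : ℝ) - k + β + 1 = β + (n - k : ℕ) + 1 := by rw [Nat.cast_sub hkn]; ring
  have hfact : (n.factorial : ℝ) ≠ 0 := by positivity
  rw [hΓ, hβ, Real.Gamma_nat_eq_factorial, Nat.cast_choose ℝ hkn, smul_smul, smul_eq_C_mul,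
    mul_pow, mul_pow, ← C_pow, ← C_pow, mul_assoc, mul_mul_mul_comm, ← C_mul, ← mul_assoc, ← C_mul,
    htwo]
  congr 2
  field_simp

theorem natDegree_jacobiP_le (n : ℕ) : (jacobiP α β n).natDegree ≤ n := by
  rw [jacobiP_eq_smul_sum]
  refine (natDegree_smul_le _ _).trans (natDegree_sum_le_of_forall_le _ _ fun k hk => ?_)
  have hkn : k ≤ n := Finset.mem_range_succ_iff.1 hk
  have hsub : ((X - 1 : ℝ[X]) ^ k).natDegree ≤ k * 1 :=
    natDegree_pow_le_of_le k (by compute_degree)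
  have hadd : ((X + 1 : ℝ[X]) ^ (n - k)).natDegree ≤ (n - k) * 1 :=
    natDegree_pow_le_of_le (n - k) (by compute_degree)
  exact (natDegree_smul_le _ _).trans ((natDegree_mul_le_of_le hsub hadd).trans (by lia))

variable {α β} (hα : -1 < α) (hβ : -1 < β) {m n : ℕ}

theorem jacobiForm_jacobiP_sub_one_pow (hmn : m < n) :
    jacobiForm hα hβ (jacobiP α β n) ((X - 1) ^ m) = 0 := by
  have hterm : ∀ k ∈ Finset.range (n + 1),
      n.choose k / (Real.Gamma (α + k + 1) * Real.Gamma (β + (n - k : ℕ) + 1)) *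
          jacobiFunctional hα hβ ((X - 1) ^ k * (X + 1) ^ (n - k) * (X - 1) ^ m) =
        (-1) ^ m * 2 ^ (α + β + n + m + 1) / Real.Gamma (α + β + n + m + 2) *
          ((-1) ^ k * n.choose k * (ascPochhammer ℝ m).eval (α + 1 + k)) := by
    intro k hk
    rw [mul_right_comm, ← pow_add, div_mul_eq_mul_div, mul_div_assoc,
      jacobiFunctional_sub_one_pow_mul_add_one_pow_div_Gamma,
      Nat.add_sub_cancel' (Finset.mem_range_succ_iff.1 hk), pow_add]
    ring
  rw [jacobiForm_apply, jacobiP_eq_smul_sum, smul_mul_assoc, Finset.sum_mul, map_smul, map_sum]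
  simp only [smul_mul_assoc, map_smul, smul_eq_mul]
  rw [Finset.sum_congr rfl hterm, ← Finset.mul_sum,
    sum_neg_one_pow_mul_choose_mul_eval_eq_zero (by rwa [ascPochhammer_natDegree]), mul_zero,
    mul_zero]

theorem jacobiForm_jacobiP_of_natDegree_lt {q : ℝ[X]} (hq : q.natDegree < n) :
    jacobiForm hα hβ (jacobiP α β n) q = 0 := by
  rw [← sum_taylor_eq q 1, Polynomial.sum, map_sum]
  refine Finset.sum_eq_zero fun i hi => ?_
  have hin : i < n := (le_natDegree_of_mem_supp i hi).trans_lt (by rwa [natDegree_taylor])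
  rw [← smul_eq_C_mul, map_smul, C_1, jacobiForm_jacobiP_sub_one_pow hα hβ hin, smul_zero]

theorem isOrthoᵢ_jacobiP : (jacobiForm hα hβ).IsOrthoᵢ (jacobiP α β) := by
  have hlt {m n : ℕ} (hmn : m < n) : jacobiForm hα hβ (jacobiP α β n) (jacobiP α β m) = 0 :=
    jacobiForm_jacobiP_of_natDegree_lt hα hβ ((natDegree_jacobiP_le α β m).trans_lt hmn)
  refine LinearMap.isOrthoᵢ_def.2 fun m n hmn => ?_
  rcases hmn.lt_or_gt with h | h
  · exact (isSymm_jacobiForm hα hβ).isRefl _ _ (hlt h)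
  · exact hlt h

end Orthogonality

section JacobiSobolev

variable {α β : ℝ}

/-- The functional `f ↦ f^{(j)}(x)` on polynomials. -/
noncomputable def evalDerivative (j : ℕ) (x : ℝ) : ℝ[X] →ₗ[ℝ] ℝ :=
  leval x ∘ₗ derivative ^ j

theorem evalDerivative_apply (j : ℕ) (x : ℝ) (q : ℝ[X]) :
    evalDerivative j x q = (derivative^[j] q).eval x := by
  rw [evalDerivative, LinearMap.comp_apply, Module.End.pow_apply, leval_apply]

theorem jacobiNormSq_nonneg (α β : ℝ) (n : ℕ) : 0 ≤ jacobiNormSq α β n := by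
  refine intervalIntegral.integral_nonneg (by norm_num) fun x hx => ?_
  have hsub : 0 ≤ (1 - x) ^ α := Real.rpow_nonneg (sub_nonneg.2 hx.2) α
  have hadd : 0 ≤ (1 + x) ^ β := Real.rpow_nonneg (neg_le_iff_add_nonneg'.1 hx.1) β
  positivity

theorem kernK_self_nonneg (α β : ℝ) (j n : ℕ) (x : ℝ) : 0 ≤ kernK α β j j n x x :=
  Finset.sum_nonneg fun i _ => div_nonneg (mul_self_nonneg _) (jacobiNormSq_nonneg α β i)

variable (hα : -1 < α) (hβ : -1 < β)

theorem jacobiNormSq_eq_jacobiForm (n : ℕ) :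
    jacobiNormSq α β n = jacobiForm hα hβ (jacobiP α β n) (jacobiP α β n) := by
  simp only [jacobiNormSq, jacobiForm_apply, jacobiFunctional_apply, jacobiWeight, eval_mul,
    pow_two, mul_assoc]

theorem kernKPoly_eq_reproducingKernel (j n : ℕ) :
    kernKPoly α β j n =
      reproducingKernel (jacobiForm hα hβ) (evalDerivative j 1) (jacobiP α β)
        (Finset.range (n + 1)) := by
  simp only [kernKPoly, reproducingKernel, jacobiNormSq_eq_jacobiForm hα hβ, smul_eq_C_mul,
    evalDerivative_apply]

theorem evalDerivative_kernKPoly (α β : ℝ) (j k n : ℕ) (x : ℝ) :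
    evalDerivative k x (kernKPoly α β j n) = kernK α β j k n 1 x := by
  simp only [kernKPoly, kernK, ← smul_eq_C_mul, map_sum, map_smul, smul_eq_mul,
    evalDerivative_apply, div_mul_eq_mul_div]

theorem sobInner_eq_rankOneUpdate (j : ℕ) (m : ℝ) (f g : ℝ[X]) :
    sobInner α β j m f g =
      (jacobiForm hα hβ + m • LinearMap.BilinForm.linMulLin (evalDerivative j 1)
        (evalDerivative j 1)) f g := by
  simp only [sobInner, LinearMap.add_apply, LinearMap.smul_apply,
    LinearMap.BilinForm.linMulLin_apply, jacobiForm_apply, jacobiFunctional_apply, jacobiWeight,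
    evalDerivative_apply, eval_mul, smul_eq_mul, mul_assoc]

end JacobiSobolev

theorem sobQ_normSq_general {α β : ℝ} (hα : -1 < α) (hβ : -1 < β) (j : ℕ) (Ms : ℕ → ℝ) {n : ℕ}
    (hn : 1 ≤ n) (hM : 1 + Ms n * kernK α β j j (n - 1) 1 1 ≠ 0) :
    sobInner α β j (Ms n) (sobQ α β j Ms n) (sobQ α β j Ms n) =
      jacobiNormSq α β n +
        Ms n * ((Polynomial.derivative^[j] (jacobiP α β n)).eval 1) ^ 2 /
          (1 + Ms n * kernK α β j j (n - 1) 1 1) := by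
  have hn_notMem : n ∉ Finset.range (n - 1 + 1) := by rw [Finset.mem_range]; lia
  have hortho := apply_reproducingKernel_of_notMem (evalDerivative j 1)
    (isOrthoᵢ_jacobiP hα hβ) hn_notMem
  have hself := apply_reproducingKernel_self (s := Finset.range (n - 1 + 1)) (evalDerivative j 1)
    (isOrthoᵢ_jacobiP hα hβ)
  rw [← kernKPoly_eq_reproducingKernel] at hortho hself
  rw [← evalDerivative_kernKPoly] at hM
  rw [sobInner_eq_rankOneUpdate hα hβ, sobQ, ← smul_eq_C_mul, jacobiNormSq_eq_jacobiForm hα hβ,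
    ← evalDerivative_apply, ← evalDerivative_kernKPoly]
  exact rankOneUpdate_apply_sub_smul_self (isSymm_jacobiForm hα hβ).isRefl _ hortho hself hM

/-- exact formula for the Sobolev norm of `Q_n`. -/
theorem sobQ_normSq (α β : ℝ) (hα : -1 < α) (hβ : -1 < β) (j : ℕ) (Ms : ℕ → ℝ)
    (hMs : ∀ n, 0 ≤ Ms n) (n : ℕ) (hn : 1 ≤ n) :
    sobInner α β j (Ms n) (sobQ α β j Ms n) (sobQ α β j Ms n) =
      jacobiNormSq α β n +
        Ms n * ((Polynomial.derivative^[j] (jacobiP α β n)).eval 1) ^ 2 /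
          (1 + Ms n * kernK α β j j (n - 1) 1 1) :=
  sobQ_normSq_general hα hβ j Ms hn
    (add_pos_of_pos_of_nonneg one_pos
      (mul_nonneg (hMs n) (kernK_self_nonneg α β j (n - 1) 1))).ne'
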